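/- Every finitely generated infinite group G has a Cayley graph (with respect to some finite generating set) that admits a regular spanning tree, i.e. a spanning subgraph which is a tree all of whose vertices have the same degree. -/

import Mathlib

open scoped Pointwise

/-- `S` is a finite generating set of the group `G`. -/
def IsFinGenSet {G : Type*} [Group G] (S : Set G) : Prop :=
  S.Finite ∧ Subgroup.closure S = ⊤

/-- The left-invariant word-length distance associated to a generating set `S`:
`wordDist S g h` is the least `n` with `g⁻¹ * h ∈ (S ∪ S⁻¹) ^ n`. -/
noncomputable def wordDist {G : Type*} [Group G] (S : Set G) (g h : G) : ℕ :=
  sInf {n : ℕ | g⁻¹ * h ∈ (S ∪ S⁻¹) ^ n}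

/-- The word metric as a real-valued distance function. -/
noncomputable def wordMetric {G : Type*} [Group G] (S : Set G) : G → G → ℝ :=
  fun g h => (wordDist S g h : ℝ)

/-- The (right) Cayley graph of a group w.r.t. a set `S`: `g` and `gs` are adjacent
for `s ∈ S ∪ S⁻¹`. -/
def cayleyGraph {G : Type*} [Group G] (S : Set G) : SimpleGraph G :=
  SimpleGraph.fromRel (fun g h => g⁻¹ * h ∈ S ∪ S⁻¹)

/-!
It suffices to find a tree on `G` all of whose vertices have the same degree and whose edges join
vertices at bounded distance in one Cayley graph: adding a large ball to the generating set then
turns these edges into edges of the new Cayley graph.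

If every finite set of vertices leaves at most two infinite components, delete a finite set leaving
as many of them as possible. Each of them is then one-ended and, by Sekanina's theorem on cubes of
finite connected graphs, is exhausted by a ray with bounded steps. Joining the at most two rays
through the finitely many leftover vertices enumerates the group by `ℕ` or `ℤ` with bounded steps,
and from such an enumeration one reads off a `2`-regular tree.

Otherwise some finite set inside a ball of radius `m` leaves at least three infinite components, and
so do its translates. Partition `G` into Voronoi cells around a maximal set of centres more than
`2 * m` apart. Deleting any cell from the graph of cells leaves at least three components, so in a
breadth-first spanning tree of cells every cell has at least two children. Give each vertex the same
number of slots for children, and the root one more. A bijection from slots to non-root vertices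
that fills every slot by a deeper vertex at bounded distance from its owner is a regular tree. By
Schröder–Bernstein it is enough to have injections both ways: slots inject into centres by following
one left child and then a bounded number of right children, and vertices inject into the slots of
the centre of the parent cell.
-/

open Function Set

section TreesFromRank

variable {V E α : Type*}

theorem isAcyclic_of_unique_lower_neighbor [LinearOrder α] {T : SimpleGraph V} (ρ : V → α)
    (hρ : ∀ v a b, T.Adj v a → T.Adj v b → ρ a ≤ ρ v → ρ b ≤ ρ v → a = b) : T.IsAcyclic := by
  classical
  intro v c hc
  obtain ⟨u, hu, hmax⟩ := c.support.toFinset.exists_max_image ρ ⟨v, by simp⟩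
  rw [List.mem_toFinset] at hu
  have hrot : (c.rotate u hu).IsCycle := hc.rotate hu
  have hle : ∀ w ∈ (c.rotate u hu).support, ρ w ≤ ρ u := fun w hw =>
    hmax w (List.mem_toFinset.2 ((c.mem_support_rotate_iff u hu).1 hw))
  exact hrot.snd_ne_penultimate <| hρ u _ _
    (SimpleGraph.Walk.adj_snd hrot.not_nil) (SimpleGraph.Walk.adj_penultimate hrot.not_nil).symm
    (hle _ <| SimpleGraph.Walk.getVert_mem_support _ _)
    (hle _ <| SimpleGraph.Walk.getVert_mem_support _ _)

theorem connected_of_exists_lower_neighbor {T : SimpleGraph V} (r : V) (ρ : V → ℕ)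
    (hρ : ∀ v, v ≠ r → ∃ w, T.Adj v w ∧ ρ w < ρ v) : T.Connected := by
  have reach : ∀ n v, ρ v = n → T.Reachable v r := by
    intro n
    induction n using Nat.strong_induction_on with
    | _ n ih =>
      rintro v rfl
      obtain rfl | hv := eq_or_ne v r
      · rfl
      · obtain ⟨w, hvw, hlt⟩ := hρ v hv
        exact hvw.reachable.trans (ih _ hlt w rfl)
  exact { preconnected := fun u v => (reach _ u rfl).trans (reach _ v rfl).symm, nonempty := ⟨r⟩ }

/-- Slots for the children in a tree with root `r`: the slot `some (v, e)` belongs to the vertex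
`v`, and the extra slot `none` belongs to the root, which has no parent. -/
def slotOwner (r : V) (s : Option (V × E)) : V :=
  s.elim r Prod.fst

/-- The graph in which the owner of each slot is joined to the vertex `child s` filling it. -/
def slotGraph (r : V) (child : Option (V × E) → V) : SimpleGraph V :=
  SimpleGraph.fromRel fun v w => ∃ s, slotOwner r s = v ∧ child s = w

/-- `Γ` has a coarse regular spanning tree: a tree on its vertices, all of whose vertices have the
same degree, and whose edges join vertices at bounded distance in `Γ`. -/
def HasCoarseRegularTree (Γ : SimpleGraph V) : Prop :=
  ∃ N : ℕ, ∃ T : SimpleGraph V, T.IsTree ∧ (∀ v w, T.Adj v w → Γ.edist v w ≤ N) ∧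
    ∃ d : ℕ∞, ∀ v, (T.neighborSet v).encard = d

section SlotGraph

variable {r : V} {child : Option (V × E) → V} {ρ : V → ℕ}

theorem slotGraph_adj (hρ : ∀ s, ρ (slotOwner r s) < ρ (child s)) {v w : V} :
    (slotGraph r child).Adj v w ↔
      (∃ s, slotOwner r s = v ∧ child s = w) ∨ ∃ s, slotOwner r s = w ∧ child s = v := by
  simp only [slotGraph, SimpleGraph.fromRel_adj, and_iff_right_iff_imp]
  rintro (⟨s, rfl, rfl⟩ | ⟨s, rfl, rfl⟩) h
  · exact (hρ s).ne (congrArg ρ h)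
  · exact (hρ s).ne' (congrArg ρ h)

theorem slotGraph_isTree (hinj : Injective child) (hrange : range child = {r}ᶜ)
    (hρ : ∀ s, ρ (slotOwner r s) < ρ (child s)) : (slotGraph r child).IsTree where
  connected := connected_of_exists_lower_neighbor r ρ fun v hv => by
    obtain ⟨s, rfl⟩ : v ∈ range child := hrange ▸ hv
    exact ⟨_, (slotGraph_adj hρ).2 (.inr ⟨s, rfl, rfl⟩), hρ s⟩
  isAcyclic := isAcyclic_of_unique_lower_neighbor ρ fun v a b ha hb hav hbv => by
    have eq_owner : ∀ w, (slotGraph r child).Adj v w → ρ w ≤ ρ v →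
        ∃ s, slotOwner r s = w ∧ child s = v := by
      intro w hw hwv
      obtain ⟨s, rfl, rfl⟩ | h := (slotGraph_adj hρ).1 hw
      · exact absurd (hρ s) hwv.not_gt
      · exact h
    obtain ⟨s, rfl, hs⟩ := eq_owner a ha hav
    obtain ⟨t, rfl, ht⟩ := eq_owner b hb hbv
    rw [hinj (hs.trans ht.symm)]

theorem exists_slotGraph_neighborSet_eq_insert (hinj : Injective child)
    (hrange : range child = {r}ᶜ) (hρ : ∀ s, ρ (slotOwner r s) < ρ (child s)) (v : V) :
    ∃ x ∉ range fun e => child (some (v, e)),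
      (slotGraph r child).neighborSet v = insert x (range fun e => child (some (v, e))) := by
  have neighbor_iff : ∀ w, w ∈ (slotGraph r child).neighborSet v ↔
      (v = r ∧ w = child none ∨ ∃ s, slotOwner r s = w ∧ child s = v) ∨
        w ∈ range fun e => child (some (v, e)) := by
    intro w
    rw [SimpleGraph.mem_neighborSet, slotGraph_adj hρ]
    simp only [slotOwner, Option.exists, Prod.exists, Option.elim_none, Option.elim_some, mem_range]
    aesop
  by_cases hv : v ∈ range child
  · obtain ⟨s, rfl⟩ := hv
    have hne : child s ∈ ({r}ᶜ : Set V) := hrange ▸ mem_range_self s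
    refine ⟨slotOwner r s, ?_, Set.ext fun w => ?_⟩
    · rintro ⟨e, he⟩
      have := (hρ s).trans (hρ (some (child s, e)))
      exact this.ne' (congrArg ρ he)
    · simp only [neighbor_iff, show child s ≠ r from hne, hinj.eq_iff, false_and, false_or,
        exists_eq_right, mem_insert_iff, eq_comm (a := w)]
  · obtain rfl : v = r := by simpa [hrange] using hv
    refine ⟨child none, ?_, Set.ext fun w => ?_⟩
    · rintro ⟨e, he⟩
      exact Option.some_ne_none _ (hinj he)
    · have hroot : ¬∃ s, slotOwner v s = w ∧ child s = v := fun ⟨s, _, hs⟩ => hv ⟨s, hs⟩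
      simp only [neighbor_iff, hroot, true_and, or_false, mem_insert_iff]

theorem hasCoarseRegularTree_of_slots (hinj : Injective child) (hrange : range child = {r}ᶜ)
    (hρ : ∀ s, ρ (slotOwner r s) < ρ (child s)) {Γ : SimpleGraph V} {N : ℕ}
    (hN : ∀ s, Γ.edist (slotOwner r s) (child s) ≤ N) : HasCoarseRegularTree Γ := by
  refine ⟨N, slotGraph r child, slotGraph_isTree hinj hrange hρ, ?_, ENat.card E + 1, fun v => ?_⟩
  · intro v w hvw
    obtain ⟨s, rfl, rfl⟩ | ⟨s, rfl, rfl⟩ := (slotGraph_adj hρ).1 hvw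
    · exact hN s
    · exact SimpleGraph.edist_comm ▸ hN s
  · obtain ⟨x, hx, hv⟩ := exists_slotGraph_neighborSet_eq_insert hinj hrange hρ v
    have hslot : Injective fun e => child (some (v, e)) := fun e e' h => by simpa using hinj h
    rw [hv, encard_insert_of_notMem hx, ← image_univ, hslot.encard_image, encard_univ]

end SlotGraph

end TreesFromRank

section Components

variable {V : Type*} {Γ : SimpleGraph V}

theorem connected_induce_componentCompl {K : Set V} (C : Γ.ComponentCompl K) :
    (Γ.induce (C : Set V)).Connected := by
  let toSupp : C.toSimpleGraph →g Γ.induce (C : Set V) :=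
    { toFun := fun v => ⟨v.1.1, v.1.2, v.2⟩, map_rel' := id }
  exact C.connected_toSimpleGraph.map toSupp fun ⟨v, hv, hvC⟩ => ⟨⟨⟨v, hv⟩, hvC⟩, rfl⟩

variable {Z P : Set V}

theorem exists_adj_of_componentCompl (hZ : (Γ.induce Z).Connected) (hPZ : P ⊆ Z)
    (hP : P.Nonempty) (D : Γ.ComponentCompl (Zᶜ ∪ P)) : ∃ d ∈ D, ∃ p ∈ P, Γ.Adj d p := by
  obtain ⟨p, hp⟩ := hP
  obtain ⟨d, hd⟩ := D.nonempty
  have hdZ : d ∈ Z := by simpa using (not_or.1 (D.notMem_of_mem hd)).1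
  obtain ⟨w⟩ := hZ.preconnected ⟨d, hdZ⟩ ⟨p, hPZ hp⟩
  have hpD : p ∉ (D : Set V) := fun h => D.notMem_of_mem h (.inr hp)
  obtain ⟨⟨⟨a, b⟩, hab⟩, -, haD, hbD⟩ := w.exists_boundary_dart {v | (v : V) ∈ D} hd hpD
  refine ⟨a, haD, b, ?_, hab⟩
  by_contra hbP
  exact hbD (D.mem_of_adj _ _ haD (by simp [hbP]) hab)

theorem connected_induce_diff_componentCompl (hZ : (Γ.induce Z).Connected) (hPZ : P ⊆ Z)
    (hP : (Γ.induce P).Connected) (C : Γ.ComponentCompl (Zᶜ ∪ P)) :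
    (Γ.induce (Z \ C)).Connected := by
  obtain ⟨⟨p, hp⟩⟩ := hP.nonempty
  have hPC : P ⊆ Z \ C := fun q hq => ⟨hPZ hq, fun h => C.notMem_of_mem h (.inr hq)⟩
  refine SimpleGraph.induce_connected_of_patches p (hPC hp) fun {v} hv => ?_
  by_cases hvP : v ∈ P
  · exact ⟨P, hPC, hp, hvP, hP.preconnected _ _⟩
  · have hvZP : v ∉ Zᶜ ∪ P := by simp [hvP, hv.1]
    set D := Γ.componentComplMk hvZP
    have hDC : (D : Set V) ⊆ Z \ C := fun d hd =>
      ⟨by simpa using (not_or.1 (D.notMem_of_mem hd)).1,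
        disjoint_left.1 (SimpleGraph.ComponentCompl.pairwise_disjoint
          fun h : D = C => hv.2 (h ▸ Γ.componentComplMk_mem hvZP)) hd⟩
    obtain ⟨d, hd, q, hq, hdq⟩ := exists_adj_of_componentCompl hZ hPZ ⟨p, hp⟩ D
    have hPD : (Γ.induce (P ∪ D)).Connected := SimpleGraph.connected_induce_union hP.preconnected
      (connected_induce_componentCompl D).preconnected hq hd hdq.symm
    exact ⟨P ∪ D, union_subset hPC hDC, .inl hp, .inr (Γ.componentComplMk_mem hvZP),
      hPD.preconnected _ _⟩

end Components

section Traversals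

variable {V : Type*} {Γ : SimpleGraph V}

/-- `L` lists the vertices of `Z` without repetition, from `x` to `y`, with consecutive entries at
distance at most `3` in the ambient graph `Γ`: a Hamiltonian path of the cube of `Γ` on `Z`. -/
structure IsTraversal (Γ : SimpleGraph V) (Z : Set V) (x y : V) (L : List V) : Prop where
  nodup : L.Nodup
  mem_iff : ∀ v, v ∈ L ↔ v ∈ Z
  isChain : L.IsChain fun u v => Γ.edist u v ≤ 3
  head_eq : L.head? = some x
  getLast_eq : L.getLast? = some y

theorem isTraversal_singleton (x : V) : IsTraversal Γ {x} x x [x] := by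
  constructor <;> simp

theorem IsTraversal.reverse {Z : Set V} {x y : V} {L : List V} (h : IsTraversal Γ Z x y L) :
    IsTraversal Γ Z y x L.reverse where
  nodup := List.nodup_reverse.2 h.nodup
  mem_iff := by simpa using h.mem_iff
  isChain := by simpa only [List.isChain_reverse, SimpleGraph.edist_comm] using h.isChain
  head_eq := by simpa using h.getLast_eq
  getLast_eq := by simpa using h.head_eq

theorem IsTraversal.append {A B : Set V} {x a b y : V} {L M : List V}
    (hL : IsTraversal Γ A x a L) (hM : IsTraversal Γ B b y M) (hAB : Disjoint A B)
    (hab : Γ.edist a b ≤ 3) : IsTraversal Γ (A ∪ B) x y (L ++ M) where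
  nodup := hL.nodup.append hM.nodup fun v hvL hvM =>
    disjoint_left.1 hAB ((hL.mem_iff v).1 hvL) ((hM.mem_iff v).1 hvM)
  mem_iff := by simp [hL.mem_iff, hM.mem_iff]
  isChain := List.isChain_append.2
    ⟨hL.isChain, hM.isChain, by simp [hL.getLast_eq, hM.head_eq, hab]⟩
  head_eq := by simp [hL.head_eq]
  getLast_eq := by simp [hM.getLast_eq]

theorem exists_isTraversal_edist_le_one {Z : Set V} {x p : V} (hZ : (Γ.induce Z).Connected)
    (hx : x ∈ Z) (hp : p ∈ Z) (h : ∀ y ∈ Z, x ≠ y → ∃ L, IsTraversal Γ Z x y L) :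
    ∃ q L, Γ.edist p q ≤ 1 ∧ IsTraversal Γ Z x q L := by
  obtain rfl | hxp := eq_or_ne x p
  · obtain hZx | hZx := Z.eq_singleton_or_nontrivial hx
    · exact ⟨x, [x], by simp, hZx ▸ isTraversal_singleton x⟩
    · have := hZx.coe_sort
      obtain ⟨⟨q, hq⟩, hxq⟩ := hZ.preconnected.exists_adj_of_nontrivial ⟨x, hx⟩
      obtain ⟨L, hL⟩ := h q hq (SimpleGraph.Adj.ne hxq)
      exact ⟨q, L, SimpleGraph.edist_le_one_iff_adj_or_eq.2 (.inl hxq), hL⟩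
  · obtain ⟨L, hL⟩ := h p hp hxp
    exact ⟨p, L, by simp, hL⟩

/-- Sekanina's theorem: the cube of a finite connected graph is Hamiltonian-connected. -/
theorem exists_isTraversal {Z : Set V} (hfin : Z.Finite) (hZ : (Γ.induce Z).Connected) {x y : V}
    (hx : x ∈ Z) (hy : y ∈ Z) (hxy : x ≠ y) : ∃ L, IsTraversal Γ Z x y L := by
  induction hn : Z.ncard using Nat.strong_induction_on generalizing Z x y with
  | _ n ih =>
    have near : ∀ {S : Set V} {u p : V}, S ⊂ Z → (Γ.induce S).Connected → u ∈ S → p ∈ S →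
        ∃ q L, Γ.edist p q ≤ 1 ∧ IsTraversal Γ S u q L := fun hSZ hS hu hp =>
      exists_isTraversal_edist_le_one hS hu hp fun v hv huv =>
        ih _ (hn ▸ ncard_lt_ncard hSZ hfin) (hfin.subset hSZ.subset) hS hu hv huv rfl
    have hyK : y ∉ Zᶜ ∪ {x} := by simp [hy, hxy.symm]
    set D := Γ.componentComplMk hyK
    have hyD : y ∈ D := Γ.componentComplMk_mem hyK
    have hxD : x ∉ D := fun h => D.notMem_of_mem h (.inr rfl)
    have hDZ : (D : Set V) ⊆ Z := fun d hd => by simpa using (not_or.1 (D.notMem_of_mem hd)).1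
    have hxZ : {x} ⊆ Z := singleton_subset_iff.2 hx
    obtain ⟨d, hd, hdx⟩ : ∃ d ∈ D, Γ.Adj d x := by
      simpa using exists_adj_of_componentCompl hZ hxZ (singleton_nonempty x) D
    obtain ⟨a, L, hxa, hL⟩ := near (p := x)
      (sdiff_subset.ssubset_of_mem_notMem hy fun h => h.2 hyD)
      (connected_induce_diff_componentCompl hZ hxZ (by simp) D) ⟨hx, hxD⟩ ⟨hx, hxD⟩
    obtain ⟨b, M, hdb, hM⟩ := near (hDZ.ssubset_of_mem_notMem hx hxD)
      (connected_induce_componentCompl D) hyD hd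
    have hab : Γ.edist a b ≤ 3 := calc
      Γ.edist a b ≤ Γ.edist a x + (Γ.edist x d + Γ.edist d b) :=
        SimpleGraph.edist_triangle.trans <| by gcongr; exact SimpleGraph.edist_triangle
      _ ≤ 1 + (1 + 1) := by
        gcongr
        · exact SimpleGraph.edist_comm ▸ hxa
        · exact SimpleGraph.edist_le_one_iff_adj_or_eq.2 (.inl hdx.symm)
      _ = 3 := by norm_num
    exact ⟨L ++ M.reverse, sdiff_union_of_subset hDZ ▸
      hL.append hM.reverse disjoint_sdiff_left hab⟩

theorem exists_isTraversal_ending_near {Z : Set V} (hfin : Z.Finite) (hZ : (Γ.induce Z).Connected)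
    {x p : V} (hx : x ∈ Z) (hp : p ∈ Z) : ∃ q L, Γ.edist p q ≤ 1 ∧ IsTraversal Γ Z x q L :=
  exists_isTraversal_edist_le_one hZ hx hp fun _ hy hxy => exists_isTraversal hfin hZ hx hy hxy

end Traversals

section Rays

variable {V : Type*} {Γ : SimpleGraph V}

/-- `Γ` has a bounded ray on `Z`: an enumeration of `Z` by `ℕ` whose consecutive entries are at
bounded distance in the ambient graph `Γ`. -/
def HasBoundedRay (Γ : SimpleGraph V) (Z : Set V) : Prop :=
  ∃ u : ℕ → V, Injective u ∧ range u = Z ∧ ∃ N : ℕ, ∀ n, Γ.edist (u n) (u (n + 1)) ≤ N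

theorem hasCoarseRegularTree_of_bijective (hΓ : Γ.Connected) {u : ℕ → V} (hu : Bijective u) {N : ℕ}
    (hN : ∀ n, Γ.edist (u n) (u (n + 2)) ≤ N) : HasCoarseRegularTree Γ := by
  let e := Equiv.ofBijective u hu
  have left_inv : ∀ n, e.symm (u n) = n := e.symm_apply_apply
  have right_inv : ∀ v, u (e.symm v) = v := e.apply_symm_apply
  let child : Option (V × Unit) → V := fun s => s.elim (u 1) fun p => u (e.symm p.1 + 2)
  refine hasCoarseRegularTree_of_slots (r := u 0) (child := child) (ρ := e.symm)
    (N := Γ.dist (u 0) (u 1) + N) ?_ ?_ ?_ ?_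
  · rintro (_ | ⟨v, _⟩) (_ | ⟨w, _⟩) h <;>
      simp_all [child, hu.1.eq_iff]
  · refine Set.ext fun v => ⟨?_, fun hv => ?_⟩
    · rintro ⟨_ | ⟨w, _⟩, rfl⟩ <;> simp [child, hu.1.eq_iff]
    · obtain ⟨_ | _ | n, rfl⟩ := hu.2 v
      · exact absurd rfl hv
      · exact ⟨none, rfl⟩
      · exact ⟨some (u n, ()), by simp [child, left_inv]⟩
  · rintro (_ | ⟨v, _⟩) <;> simp [child, slotOwner, left_inv]
  · rintro (_ | ⟨v, _⟩)
    · simp [child, slotOwner, ← (hΓ.preconnected (u 0) (u 1)).coe_dist_eq_edist]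
    · have hv : Γ.edist v (u (e.symm v + 2)) ≤ N := by simpa only [right_inv] using hN (e.symm v)
      exact hv.trans (by simp)

theorem HasBoundedRay.hasCoarseRegularTree (hΓ : Γ.Connected) (h : HasBoundedRay Γ univ) :
    HasCoarseRegularTree Γ := by
  obtain ⟨u, hu, hrange, N, hN⟩ := h
  refine hasCoarseRegularTree_of_bijective (N := N + N) hΓ ⟨hu, range_eq_univ.1 hrange⟩ fun n => ?_
  push_cast
  exact SimpleGraph.edist_triangle.trans (add_le_add (hN n) (hN (n + 1)))

theorem HasBoundedRay.hasCoarseRegularTree_of_compl (hΓ : Γ.Connected) {Z : Set V}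
    (hZ : HasBoundedRay Γ Z) (hZc : HasBoundedRay Γ Zᶜ) : HasCoarseRegularTree Γ := by
  obtain ⟨a, ha, haZ, M, hM⟩ := hZ
  obtain ⟨b, hb, hbZ, N, hN⟩ := hZc
  have hbij : Bijective (Sum.elim a b ∘ Equiv.natSumNatEquivNat.symm) := by
    refine Bijective.comp ⟨ha.sumElim hb fun m n h => ?_, ?_⟩ (Equiv.bijective _)
    · have hmem : b n ∈ Zᶜ := hbZ ▸ mem_range_self n
      exact hmem (h ▸ haZ ▸ mem_range_self m)
    · rw [← range_eq_univ, Sum.elim_range, haZ, hbZ, union_compl_self]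
  refine hasCoarseRegularTree_of_bijective (N := M + N) hΓ hbij fun n => ?_
  obtain ⟨s, rfl⟩ := Equiv.natSumNatEquivNat.surjective n
  obtain n | n := s
  · have hstep : Equiv.natSumNatEquivNat (.inl n) + 2 = Equiv.natSumNatEquivNat (.inl (n + 1)) := by
      simp [mul_add]
    simpa only [hstep, comp_apply, Equiv.symm_apply_apply, Sum.elim_inl, Nat.cast_add]
      using (hM n).trans le_self_add
  · have hstep : Equiv.natSumNatEquivNat (.inr n) + 2 = Equiv.natSumNatEquivNat (.inr (n + 1)) := by
      simp [mul_add, add_right_comm]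
    simpa only [hstep, comp_apply, Equiv.symm_apply_apply, Sum.elim_inr, Nat.cast_add]
      using (hN n).trans le_add_self

theorem HasBoundedRay.insert (hΓ : Γ.Connected) {Z : Set V} (h : HasBoundedRay Γ Z) {v : V}
    (hv : v ∉ Z) : HasBoundedRay Γ (insert v Z) := by
  obtain ⟨u, hu, rfl, N, hN⟩ := h
  refine ⟨fun n => n.casesOn v u, ?_, ?_, Γ.dist v (u 0) + N, ?_⟩
  · rintro (_ | m) (_ | n) hmn
    · rfl
    · exact absurd ⟨n, hmn.symm⟩ hv
    · exact absurd ⟨m, hmn⟩ hv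
    · exact congrArg _ (hu hmn)
  · refine Set.ext fun w => ⟨?_, ?_⟩
    · rintro ⟨_ | n, rfl⟩ <;> simp
    · rintro (rfl | ⟨n, rfl⟩)
      exacts [⟨0, rfl⟩, ⟨n + 1, rfl⟩]
  · rintro (_ | n)
    · simp [← (hΓ.preconnected v (u 0)).coe_dist_eq_edist]
    · exact (hN n).trans (by simp)

theorem HasBoundedRay.of_finite_diff (hΓ : Γ.Connected) {Z W : Set V} (h : HasBoundedRay Γ Z)
    (hZW : Z ⊆ W) (hfin : (W \ Z).Finite) : HasBoundedRay Γ W := by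
  have key : ∀ F : Set V, F.Finite → Disjoint F Z → HasBoundedRay Γ (F ∪ Z) := by
    intro F hF
    induction F, hF using Set.Finite.induction_on with
    | empty => simpa using h
    | @insert v F hv _ ih =>
      intro hdisj
      rw [disjoint_insert_left] at hdisj
      rw [insert_union]
      exact (ih hdisj.2).insert hΓ (by simp [hv, hdisj.1])
  simpa only [sdiff_union_of_subset hZW] using key _ hfin disjoint_sdiff_left

end Rays

section OneEnded

variable {V : Type*} {Γ : SimpleGraph V}

theorem exists_injective_of_prefix_chain {α : Type*} {R : α → α → Prop} {S : ℕ → List α}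
    (hprefix : ∀ n, S n <+: S (n + 1)) (hlength : ∀ n, n ≤ (S n).length)
    (hnodup : ∀ n, (S n).Nodup) (hchain : ∀ n, (S n).IsChain R) :
    ∃ u : ℕ → α, Injective u ∧ range u = {v | ∃ n, v ∈ S n} ∧ ∀ n, R (u n) (u (n + 1)) := by
  have prefix_of_le : ∀ {m n}, m ≤ n → S m <+: S n := fun hmn =>
    Nat.le_induction List.prefix_rfl (fun n _ ih => ih.trans (hprefix n)) _ hmn
  let u : ℕ → α := fun n => (S (n + 1))[n]'(hlength (n + 1))
  have getElem_eq : ∀ n i (hi : i < (S n).length), (S n)[i] = u i := by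
    intro n i hi
    obtain h | h := le_total n (i + 1)
    · exact (prefix_of_le h).getElem hi
    · exact ((prefix_of_le h).getElem (hlength (i + 1))).symm
  have hlt : ∀ {i n}, i < n → i < (S n).length := fun h => h.trans_le (hlength _)
  refine ⟨u, fun i j hij => ?_, Set.ext fun v => ⟨?_, ?_⟩, fun n => ?_⟩
  · have hi := hlt (show i < max i j + 1 by omega)
    have hj := hlt (show j < max i j + 1 by omega)
    rwa [← getElem_eq _ i hi, ← getElem_eq _ j hj, (hnodup _).getElem_inj_iff] at hij
  · rintro ⟨n, rfl⟩
    exact ⟨n + 1, List.getElem_mem _⟩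
  · rintro ⟨n, hv⟩
    obtain ⟨i, hi, rfl⟩ := List.mem_iff_getElem.1 hv
    exact ⟨i, (getElem_eq n i hi).symm⟩
  · have hn := hlt (show n + 1 < n + 2 by omega)
    rw [← getElem_eq (n + 2) n (by omega), ← getElem_eq (n + 2) (n + 1) hn]
    exact List.isChain_iff_getElem.1 (hchain _) n hn

/-- `A` is a connected infinite set of vertices with exactly one end: deleting a finite set `F`
from `A` leaves a component containing all but finitely many vertices of `A`. -/
structure IsOneEndedOn (Γ : SimpleGraph V) (A : Set V) : Prop where
  connected : (Γ.induce A).Connected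
  infinite : A.Infinite
  exists_cofinite_componentCompl :
    ∀ F : Set V, F.Finite → ∃ C : Γ.ComponentCompl (Aᶜ ∪ F), (A \ C).Finite

/-- `L` is the beginning of a traversal of `A` that can be prolonged: what remains of `A` is
connected and contains a vertex at distance at most `3` from the last entry of `L`. -/
structure IsPartialTraversal (Γ : SimpleGraph V) (A : Set V) (L : List V) : Prop where
  nodup : L.Nodup
  subset : ∀ v ∈ L, v ∈ A
  isChain : L.IsChain fun u v => Γ.edist u v ≤ 3
  connected : (Γ.induce (A \ {v | v ∈ L})).Connected
  exists_edist_le : ∃ x ∈ A \ {v | v ∈ L}, ∀ l ∈ L.getLast?, Γ.edist l x ≤ 3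

variable {A : Set V}

theorem IsOneEndedOn.isPartialTraversal_nil (hA : IsOneEndedOn Γ A) :
    IsPartialTraversal Γ A [] where
  nodup := List.nodup_nil
  subset := by simp
  isChain := List.isChain_nil
  connected := (by simp : A = A \ {v | v ∈ []}) ▸ hA.connected
  exists_edist_le := by simpa using nonempty_def.1 hA.infinite.nonempty

theorem exists_finite_connected_of_mem {Z : Set V} (hZ : (Γ.induce Z).Connected) {x y : V}
    (hx : x ∈ Z) (hy : y ∈ Z) :
    ∃ P ⊆ Z, P.Finite ∧ (Γ.induce P).Connected ∧ x ∈ P ∧ y ∈ P := by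
  obtain ⟨w⟩ := hZ.preconnected ⟨x, hx⟩ ⟨y, hy⟩
  let w' := w.map (SimpleGraph.Embedding.induce Z).toHom
  refine ⟨{v | v ∈ w'.support}, ?_, List.finite_toSet _, w'.connected_induce_support,
    w'.start_mem_support, w'.end_mem_support⟩
  intro v hv
  rw [mem_ofPred_eq, SimpleGraph.Walk.support_map] at hv
  obtain ⟨z, -, rfl⟩ := List.mem_map.1 hv
  exact z.2

theorem exists_isTraversal_diff_componentCompl {Z P : Set V} (hZ : (Γ.induce Z).Connected)
    (hPZ : P ⊆ Z) (hP : (Γ.induce P).Connected) {x : V} (hx : x ∈ P)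
    {C : Γ.ComponentCompl (Zᶜ ∪ P)} (hC : (Z \ C).Finite) :
    ∃ q M, IsTraversal Γ (Z \ C) x q M ∧ ∃ d ∈ C, Γ.edist q d ≤ 3 := by
  have hPC : P ⊆ Z \ C := fun p hp => ⟨hPZ hp, fun h => C.notMem_of_mem h (.inr hp)⟩
  obtain ⟨d, hd, p, hp, hdp⟩ := exists_adj_of_componentCompl hZ hPZ ⟨x, hx⟩ C
  obtain ⟨q, M, hpq, hM⟩ := exists_isTraversal_ending_near hC
    (connected_induce_diff_componentCompl hZ hPZ hP C) (hPC hx) (hPC hp)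
  refine ⟨q, M, hM, d, hd, ?_⟩
  calc
    Γ.edist q d ≤ Γ.edist q p + Γ.edist p d := SimpleGraph.edist_triangle
    _ ≤ 1 + 1 := by
      gcongr
      · exact SimpleGraph.edist_comm ▸ hpq
      · exact SimpleGraph.edist_le_one_iff_adj_or_eq.2 (.inl hdp.symm)
    _ ≤ 3 := by norm_num

theorem IsOneEndedOn.exists_isPartialTraversal_append (hA : IsOneEndedOn Γ A) {L : List V}
    (hL : IsPartialTraversal Γ A L) {t : V} (ht : t ∈ A) :
    ∃ M ≠ [], IsPartialTraversal Γ A (L ++ M) ∧ t ∈ L ++ M := by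
  obtain ⟨x, hx, hLx⟩ := hL.exists_edist_le
  set Z := A \ {v | v ∈ L} with hZ
  obtain ⟨t', ht', htt'⟩ : ∃ t' ∈ Z, t ∈ L ∨ t' = t := by
    by_cases h : t ∈ L
    exacts [⟨x, hx, .inl h⟩, ⟨t, ⟨ht, h⟩, .inr rfl⟩]
  obtain ⟨P, hPZ, hPfin, hP, hxP, htP⟩ := exists_finite_connected_of_mem hL.connected hx ht'
  have hcompl : Aᶜ ∪ ({v | v ∈ L} ∪ P) = Zᶜ ∪ P := by
    rw [hZ, sdiff_eq, compl_inter, compl_compl, union_assoc]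
  obtain ⟨C, hC⟩ : ∃ C : Γ.ComponentCompl (Zᶜ ∪ P), (A \ C).Finite :=
    hcompl ▸ hA.exists_cofinite_componentCompl _ (L.finite_toSet.union hPfin)
  have hCZ : (C : Set V) ⊆ Z := fun c hc => by
    simpa only [mem_compl_iff, not_not] using (not_or.1 (C.notMem_of_mem hc)).1
  obtain ⟨q, M, hM, d, hd, hqd⟩ := exists_isTraversal_diff_componentCompl hL.connected hPZ hP hxP
    (hC.subset (sdiff_subset_sdiff_left sdiff_subset))
  have hrest : A \ {v | v ∈ L ++ M} = C := calc
    A \ {v | v ∈ L ++ M} = Z \ (Z \ C) := by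
      ext v; simp only [mem_sdiff, mem_ofPred_eq, List.mem_append, hM.mem_iff, hZ]; tauto
    _ = C := sdiff_sdiff_cancel_left hCZ
  have hM_ne : M ≠ [] := by rintro rfl; simpa using hM.head_eq
  have hlast : (L ++ M).getLast? = some q := by simp [hM.getLast_eq]
  refine ⟨M, hM_ne, ⟨?_, ?_, ?_, hrest ▸ connected_induce_componentCompl C, ?_⟩, ?_⟩
  · exact hL.nodup.append hM.nodup fun v hvL hvM => ((hM.mem_iff v).1 hvM).1.2 hvL
  · simp only [List.mem_append]
    rintro v (hv | hv)
    exacts [hL.subset v hv, ((hM.mem_iff v).1 hv).1.1]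
  · exact List.isChain_append.2 ⟨hL.isChain, hM.isChain, by simpa [hM.head_eq] using hLx⟩
  · exact hrest ▸ ⟨d, hd, by simpa [hlast] using hqd⟩
  · rw [List.mem_append, hM.mem_iff]
    obtain h | rfl := htt'
    exacts [.inl h, .inr ⟨ht', fun h => C.notMem_of_mem h (.inr htP)⟩]

theorem IsOneEndedOn.hasBoundedRay [Countable V] (hA : IsOneEndedOn Γ A) : HasBoundedRay Γ A := by
  obtain ⟨t, ht⟩ := A.to_countable.exists_eq_range hA.infinite.nonempty
  have htA : ∀ n, t n ∈ A := fun n => ht ▸ mem_range_self n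
  choose! M hM_ne hM ht_mem using fun (L : List V) (hL : IsPartialTraversal Γ A L) (n : ℕ) =>
    hA.exists_isPartialTraversal_append hL (htA n)
  let S : ℕ → List V := fun n => n.rec [] fun n L => L ++ M L n
  have hS : ∀ n, IsPartialTraversal Γ A (S n) := fun n => by
    induction n with
    | zero => exact hA.isPartialTraversal_nil
    | succ n ih => exact hM _ ih n
  have hlength : ∀ n, n ≤ (S n).length := fun n => by
    induction n with
    | zero => exact Nat.zero_le _
    | succ n ih =>
      have := List.length_pos_iff.2 (hM_ne _ (hS n) n)
      rw [show S (n + 1) = S n ++ M (S n) n from rfl, List.length_append]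
      omega
  obtain ⟨u, hu, hrange, hstep⟩ := exists_injective_of_prefix_chain
    (fun n => List.prefix_append (S n) _) hlength (fun n => (hS n).nodup) (fun n => (hS n).isChain)
  refine ⟨u, hu, hrange.trans (Set.ext fun v => ⟨?_, fun hv => ?_⟩), 3, hstep⟩
  · rintro ⟨n, hv⟩
    exact (hS n).subset v hv
  · obtain ⟨n, rfl⟩ : v ∈ range t := ht ▸ hv
    exact ⟨n + 1, ht_mem _ (hS n) n⟩

end OneEnded

section FewEnds

variable {V : Type*} {Γ : SimpleGraph V}

theorem finite_setOf_edist_le [Γ.LocallyFinite] (n : ℕ) (v : V) :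
    {w | Γ.edist v w ≤ n}.Finite := by
  induction n generalizing v with
  | zero => simp
  | succ n ih =>
    refine (((Γ.neighborSet v).toFinite.biUnion fun u _ => ih u).insert v).subset fun w hw => ?_
    obtain ⟨p, hp⟩ := SimpleGraph.exists_walk_of_edist_ne_top
      (ne_top_of_le_ne_top (ENat.natCast_ne_top _) (mem_ofPred_eq ▸ hw))
    have hlength : p.length ≤ n + 1 := by exact_mod_cast hp.trans_le hw
    cases p with
    | nil => exact mem_insert _ _
    | cons hvu q =>
      have hq : (q.length : ℕ∞) ≤ n := by
        exact_mod_cast Nat.le_of_succ_le_succ (by simpa using hlength)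
      exact .inr (mem_biUnion hvu ((SimpleGraph.edist_le q).trans hq))

theorem countable_of_connected [Γ.LocallyFinite] (hΓ : Γ.Connected) : Countable V := by
  obtain ⟨v⟩ := hΓ.nonempty
  refine countable_univ_iff.1 ((countable_iUnion fun n =>
    (finite_setOf_edist_le (Γ := Γ) n v).countable).mono fun w _ => mem_iUnion.2 ⟨Γ.dist v w, ?_⟩)
  exact (hΓ.preconnected v w).coe_dist_eq_edist.ge

theorem subset_componentComplMk {D K : Set V} (hD : (Γ.induce D).Connected) (hDK : D ⊆ Kᶜ) {v : V}
    (hv : v ∈ D) : D ⊆ (Γ.componentComplMk (hDK hv) : Set V) := fun d hd =>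
  ⟨hDK hd, SimpleGraph.ConnectedComponent.eq.2 <|
    (hD.preconnected ⟨d, hd⟩ ⟨v, hv⟩).map (SimpleGraph.induceHomOfLE Γ hDK).toHom⟩

/-- The infinite components left when the finite set `K` of vertices is deleted. -/
def infiniteComponents (Γ : SimpleGraph V) (K : Finset V) : Set (Γ.ComponentCompl K) :=
  {C | (C : Set V).Infinite}

variable [Γ.LocallyFinite] [Fact Γ.Preconnected] {K L : Finset V}

theorem finite_compl_biUnion_infiniteComponents (K : Finset V) :
    (⋃ C ∈ infiniteComponents Γ K, (C : Set V))ᶜ.Finite := by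
  have hfin : (⋃ C ∈ (infiniteComponents Γ K)ᶜ, (C : Set V)).Finite :=
    (toFinite _).biUnion fun C hC => not_infinite.1 hC
  refine (K.finite_toSet.union hfin).subset fun v hv => or_iff_not_imp_left.2 fun hvK => ?_
  exact mem_biUnion (x := Γ.componentComplMk hvK)
    (fun h => hv (mem_biUnion h (Γ.componentComplMk_mem hvK))) (Γ.componentComplMk_mem hvK)

theorem surjOn_hom_infiniteComponents (hKL : K ⊆ L) :
    SurjOn (SimpleGraph.ComponentCompl.hom (Finset.coe_subset.2 hKL))
      (infiniteComponents Γ L) (infiniteComponents Γ K) := by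
  intro C hC
  by_contra! h
  refine hC ((finite_compl_biUnion_infiniteComponents (Γ := Γ) L).subset fun v hv hvD => ?_)
  obtain ⟨D, hD, hvD⟩ := mem_iUnion₂.1 hvD
  exact h ⟨D, hD, (D.hom_eq_iff_not_disjoint _ C).2 (not_disjoint_iff.2 ⟨v, hvD, hv⟩)⟩

theorem injOn_hom_infiniteComponents (hKL : K ⊆ L)
    (hcard : (infiniteComponents Γ L).ncard ≤ (infiniteComponents Γ K).ncard) :
    InjOn (SimpleGraph.ComponentCompl.hom (G := Γ) (Finset.coe_subset.2 hKL))
      (infiniteComponents Γ L) := by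
  refine injOn_of_ncard_image_eq ((ncard_image_le (toFinite _)).antisymm (hcard.trans ?_))
  exact ncard_le_ncard (surjOn_hom_infiniteComponents hKL) (toFinite _)

theorem isOneEndedOn_of_ncard_infiniteComponents_le
    (hK : ∀ L, (infiniteComponents Γ L).ncard ≤ (infiniteComponents Γ K).ncard)
    {C : Γ.ComponentCompl K} (hC : C ∈ infiniteComponents Γ K) : IsOneEndedOn Γ (C : Set V) where
  connected := connected_induce_componentCompl C
  infinite := hC
  exists_cofinite_componentCompl F hF := by
    classical
    have hKL : K ⊆ K ∪ hF.toFinset := Finset.subset_union_left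
    obtain ⟨D, hD, hDC⟩ := surjOn_hom_infiniteComponents hKL hC
    obtain ⟨v, hv⟩ := D.nonempty
    have hDF : (D : Set V) ⊆ ((C : Set V)ᶜ ∪ F)ᶜ := by
      refine subset_compl_comm.2 (union_subset ?_ fun w hwF hwD => D.notMem_of_mem hwD ?_)
      · exact compl_subset_compl.2 ((D.hom_eq_iff_le _ C).1 hDC)
      · simp [hwF]
    refine ⟨Γ.componentComplMk (hDF hv),
      (finite_compl_biUnion_infiniteComponents (Γ := Γ) (K ∪ hF.toFinset)).subset ?_⟩
    intro w hw hwD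
    obtain ⟨D', hD', hwD'⟩ := mem_iUnion₂.1 hwD
    have hDC' := (D'.hom_eq_iff_not_disjoint (Finset.coe_subset.2 hKL) C).2
      (not_disjoint_iff.2 ⟨w, hwD', hw.1⟩)
    obtain rfl := injOn_hom_infiniteComponents hKL (hK _) hD' hD (hDC'.trans hDC.symm)
    exact hw.2 (subset_componentComplMk (connected_induce_componentCompl D') hDF hv hwD')

theorem hasCoarseRegularTree_of_ncard_infiniteComponents_le_two [Infinite V]
    (h : ∀ K, (infiniteComponents Γ K).ncard ≤ 2) : HasCoarseRegularTree Γ := by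
  have : Nonempty V := inferInstance
  have hΓ : Γ.Connected := ⟨Fact.out⟩
  have := countable_of_connected hΓ
  obtain ⟨K, hK⟩ := Nat.sSup_mem (range_nonempty fun K => (infiniteComponents Γ K).ncard)
    ⟨2, forall_mem_range.2 h⟩
  have hmax : ∀ L, (infiniteComponents Γ L).ncard ≤ (infiniteComponents Γ K).ncard := fun L =>
    (le_csSup ⟨2, forall_mem_range.2 h⟩ (mem_range_self L)).trans hK.ge
  have hray : ∀ C ∈ infiniteComponents Γ K, HasBoundedRay Γ (C : Set V) := fun C hC =>
    (isOneEndedOn_of_ncard_infiniteComponents_le hmax hC).hasBoundedRay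
  have hfin := finite_compl_biUnion_infiniteComponents (Γ := Γ) K
  obtain hzero | hone | htwo : (infiniteComponents Γ K).ncard = 0 ∨
      (infiniteComponents Γ K).ncard = 1 ∨ (infiniteComponents Γ K).ncard = 2 := by
    have := h K
    omega
  · rw [ncard_eq_zero (toFinite _)] at hzero
    simp [hzero, finite_univ_iff, not_finite_iff_infinite.2 ‹Infinite V›] at hfin
  · obtain ⟨C, hC⟩ := ncard_eq_one.1 hone
    rw [hC, biUnion_singleton, compl_eq_univ_sdiff] at hfin
    exact ((hray C (hC ▸ rfl)).of_finite_diff hΓ (subset_univ _) hfin).hasCoarseRegularTree hΓ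
  · obtain ⟨C, D, hCD, hKCD⟩ := ncard_eq_two.1 htwo
    rw [hKCD, biUnion_pair, compl_union, ← Set.sdiff_eq] at hfin
    have hDC : (D : Set V) ⊆ (C : Set V)ᶜ :=
      (SimpleGraph.ComponentCompl.pairwise_disjoint hCD).subset_compl_left
    exact (hray C (hKCD ▸ by simp)).hasCoarseRegularTree_of_compl hΓ
      ((hray D (hKCD ▸ by simp)).of_finite_diff hΓ hDC hfin)

end FewEnds

section Branching

variable {X : Type*} {Q : SimpleGraph X}

theorem exists_adj_dist_add_one_eq (hQ : Q.Connected) {x y : X} (hxy : y ≠ x) :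
    ∃ z, Q.Adj z y ∧ Q.dist x z + 1 = Q.dist x y := by
  obtain ⟨p, hp⟩ := hQ.exists_walk_length_eq_dist y x
  cases p with
  | nil => exact absurd rfl hxy
  | @cons _ z _ hyz q =>
    refine ⟨z, hyz.symm, ?_⟩
    rw [SimpleGraph.Walk.length_cons, SimpleGraph.dist_comm] at hp
    have hq := SimpleGraph.dist_comm (G := Q) ▸ SimpleGraph.dist_le q
    have htri := hQ.dist_triangle (u := x) (v := z) (w := y)
    rw [SimpleGraph.dist_eq_one_iff_adj.2 hyz.symm] at htri
    omega

/-- A breadth-first spanning tree of `Q` with root `r` in which every vertex `x` has at least two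
children `left x` and `right x`. The root is its own parent. -/
structure IsBranchingTree (Q : SimpleGraph X) (r : X) (parent left right : X → X) : Prop where
  parent_root : parent r = r
  adj_parent : ∀ x ≠ r, Q.Adj (parent x) x
  dist_parent : ∀ x ≠ r, Q.dist r (parent x) + 1 = Q.dist r x
  left_ne_root : ∀ x, left x ≠ r
  right_ne_root : ∀ x, right x ≠ r
  parent_left : ∀ x, parent (left x) = x
  parent_right : ∀ x, parent (right x) = x
  left_ne_right : ∀ x, left x ≠ right x

theorem exists_mem_componentCompl_parent_eq {r x : X} {parent : X → X}
    (hadj : ∀ w ≠ r, Q.Adj (parent w) w) (hdist : ∀ w ≠ r, Q.dist r (parent w) + 1 = Q.dist r w)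
    {D : Q.ComponentCompl {x}} (hr : r ∉ D) : ∃ w ∈ D, parent w = x := by
  obtain ⟨w, hw, hmin⟩ := exists_minimalFor_of_wellFoundedLT (· ∈ D) (Q.dist r) D.nonempty
  have hwr : w ≠ r := fun h => hr (h ▸ hw)
  refine ⟨w, hw, of_not_not fun h => ?_⟩
  have hlt := hdist w hwr
  have := hmin (D.mem_of_adj _ _ hw h (hadj w hwr).symm) (by omega)
  omega

theorem exists_ne_notMem_componentCompl {K : Set X} (h : 2 < ENat.card (Q.ComponentCompl K))
    (r : X) : ∃ D E : Q.ComponentCompl K, D ≠ E ∧ r ∉ D ∧ r ∉ E := by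
  let A : Set (Q.ComponentCompl K) := {D | r ∈ D}
  have hA : A.encard ≤ 1 := encard_le_one_iff_subsingleton.2 fun D hD E hE =>
    SimpleGraph.ComponentCompl.pairwise_disjoint.eq (not_disjoint_iff.2 ⟨r, hD, hE⟩)
  have hcompl : 1 < Aᶜ.encard := by
    by_contra! hle
    refine h.not_ge ?_
    rw [← encard_univ, ← encard_add_encard_compl A, ← one_add_one_eq_two]
    exact add_le_add hA hle
  obtain ⟨D, hD, E, hE, hDE⟩ := one_lt_encard_iff_nontrivial.1 hcompl
  exact ⟨D, E, hDE, hD, hE⟩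

theorem exists_isBranchingTree (hQ : Q.Connected) (r : X)
    (hbranch : ∀ x, 2 < ENat.card (Q.ComponentCompl {x})) :
    ∃ parent left right, IsBranchingTree Q r parent left right := by
  classical
  choose! p hadj hdist using fun x (hx : x ≠ r) => exists_adj_dist_add_one_eq hQ hx
  have child : ∀ x, ∃ a b, a ≠ r ∧ b ≠ r ∧ p a = x ∧ p b = x ∧ a ≠ b := by
    intro x
    obtain ⟨D, E, hDE, hD, hE⟩ := exists_ne_notMem_componentCompl (hbranch x) r
    obtain ⟨a, ha, rfl⟩ := exists_mem_componentCompl_parent_eq hadj hdist hD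
    obtain ⟨b, hb, hba⟩ := exists_mem_componentCompl_parent_eq hadj hdist hE
    refine ⟨a, b, fun h => hD (h ▸ ha), fun h => hE (h ▸ hb), rfl, hba, ?_⟩
    exact (SimpleGraph.ComponentCompl.pairwise_disjoint hDE).ne_of_mem ha hb
  choose L R hL hR hpL hpR hLR using child
  refine ⟨update p r r, L, R, ⟨by simp, ?_, ?_, hL, hR, ?_, ?_, hLR⟩⟩
  · exact fun x hx => by simpa [hx] using hadj x hx
  · exact fun x hx => by simpa [hx] using hdist x hx
  · exact fun x => by simpa [hL x] using hpL x
  · exact fun x => by simpa [hR x] using hpR x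

namespace IsBranchingTree

variable {r : X} {parent left right : X → X}

theorem dist_left (h : IsBranchingTree Q r parent left right) (x : X) :
    Q.dist r (left x) = Q.dist r x + 1 := by
  rw [← h.dist_parent _ (h.left_ne_root x), h.parent_left]

theorem dist_right (h : IsBranchingTree Q r parent left right) (x : X) :
    Q.dist r (right x) = Q.dist r x + 1 := by
  rw [← h.dist_parent _ (h.right_ne_root x), h.parent_right]

theorem left_apply_ne_right_apply (h : IsBranchingTree Q r parent left right) (x y : X) :
    left x ≠ right y := fun hxy => by
  obtain rfl : x = y := by rw [← h.parent_left x, hxy, h.parent_right]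
  exact h.left_ne_right x hxy

theorem injective_iterate_right_left (h : IsBranchingTree Q r parent left right) :
    Injective fun z : X × ℕ => right^[z.2] (left z.1) := by
  have hleft : Injective left := LeftInverse.injective h.parent_left
  have hright : Injective right := LeftInverse.injective h.parent_right
  have key : ∀ {x y i j}, i ≤ j → right^[i] (left x) = right^[j] (left y) → (x, i) = (y, j) := by
    intro x y i j hij hxy
    obtain ⟨k, rfl⟩ := exists_add_of_le hij
    rw [iterate_add_apply] at hxy
    have hxy' := hright.iterate i hxy
    cases k with
    | zero => rw [hleft hxy', add_zero]
    | succ k =>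
      rw [iterate_succ_apply'] at hxy'
      exact absurd hxy' (h.left_apply_ne_right_apply _ _)
  intro ⟨x, i⟩ ⟨y, j⟩ hxy
  obtain hij | hij := le_total i j
  exacts [key hij hxy, (key hij hxy.symm).symm]

theorem dist_iterate_right_left (h : IsBranchingTree Q r parent left right) (x : X) (i : ℕ) :
    Q.dist r (right^[i] (left x)) = Q.dist r x + i + 1 := by
  induction i with
  | zero => simp [h.dist_left]
  | succ i ih => rw [iterate_succ_apply', h.dist_right, ih]; omega

end IsBranchingTree

end Branching

section Voronoi

variable {V X : Type*} {Γ : SimpleGraph V} {m : ℕ} {s : X → V} {c : V → X}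

/-- A Voronoi decomposition of `Γ`: the centres `s x` are more than `2 * m` apart, and each vertex
`v` belongs to the cell `c v` of a nearest centre, which is at distance at most `2 * m`. -/
structure IsVoronoi (Γ : SimpleGraph V) (m : ℕ) (s : X → V) (c : V → X) : Prop where
  lt_dist : ∀ x y, x ≠ y → 2 * m < Γ.dist (s x) (s y)
  dist_le_dist : ∀ v x, Γ.dist (s (c v)) v ≤ Γ.dist (s x) v
  dist_le : ∀ v, Γ.dist (s (c v)) v ≤ 2 * m

theorem exists_isVoronoi [Nonempty V] (Γ : SimpleGraph V) (m : ℕ) :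
    ∃ (C : Set V) (c : V → C), IsVoronoi Γ m Subtype.val c := by
  obtain ⟨C, hC⟩ := zorn_subset {C : Set V | C.Pairwise fun x y => 2 * m < Γ.dist x y}
    fun A hA hchain =>
      ⟨⋃₀ A, (pairwise_sUnion hchain.directedOn).2 hA, fun _ => subset_sUnion_of_mem⟩
  have hnear : ∀ v, ∃ x : C, Γ.dist x v ≤ 2 * m := by
    intro v
    by_contra! h
    have hv : v ∈ C := hC.mem_of_prop_insert <| hC.prop.insert fun x hx _ =>
      ⟨SimpleGraph.dist_comm (G := Γ) ▸ h ⟨x, hx⟩, h ⟨x, hx⟩⟩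
    simpa using h ⟨v, hv⟩
  have : Nonempty C := ⟨(hnear (Classical.arbitrary V)).choose⟩
  refine ⟨C, fun v => argmin fun x : C => Γ.dist x v, fun x y hxy => ?_, fun v x => ?_, fun v => ?_⟩
  · exact hC.prop x.2 y.2 (Subtype.coe_ne_coe.2 hxy)
  · exact argmin_le (fun x : C => Γ.dist x v) x
  · obtain ⟨x, hx⟩ := hnear v
    exact (argmin_le (fun x : C => Γ.dist x v) x).trans hx

theorem edist_le_of_dist_le (hΓ : Γ.Connected) {v w : V} {n : ℕ}
    (h : Γ.dist v w ≤ n) : Γ.edist v w ≤ n := by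
  rw [← (hΓ.preconnected v w).coe_dist_eq_edist]
  exact_mod_cast h

theorem notMem_of_dist_le (hΓ : Γ.Connected) {K : Set V} {x y t : V}
    (hK : ∀ k ∈ K, Γ.dist x k ≤ m) (hxt : 2 * m < Γ.dist x t) (hty : Γ.dist t y ≤ Γ.dist x y) :
    y ∉ K := fun hy => by
  have htri := hΓ.dist_triangle (u := x) (v := y) (w := t)
  rw [SimpleGraph.dist_comm (u := y)] at htri
  have := hK y hy
  omega

theorem componentComplMk_eq_of_dist_le (hΓ : Γ.Connected) {K : Set V} {x y t : V}
    (hK : ∀ k ∈ K, Γ.dist x k ≤ m) (hxt : 2 * m < Γ.dist x t) (hty : Γ.dist t y ≤ Γ.dist x y)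
    (hy : y ∉ K) (ht : t ∉ K) : Γ.componentComplMk hy = Γ.componentComplMk ht := by
  induction hn : Γ.dist t y generalizing y with
  | zero =>
    obtain rfl := (hΓ.dist_eq_zero_iff).1 hn
    rfl
  | succ n ih =>
    have hyt : y ≠ t := by
      rintro rfl
      simp at hn
    obtain ⟨z, hzy, hz⟩ := exists_adj_dist_add_one_eq hΓ hyt
    have htri := hΓ.dist_triangle (u := x) (v := z) (w := y)
    rw [SimpleGraph.dist_eq_one_iff_adj.2 hzy] at htri
    have htz : Γ.dist t z ≤ Γ.dist x z := by omega
    have hzK := notMem_of_dist_le hΓ hK hxt htz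
    rw [SimpleGraph.componentComplMk_eq_of_adj Γ hy hzK hzy.symm]
    exact ih htz hzK (by omega)

namespace IsVoronoi

theorem apply_centre (h : IsVoronoi Γ m s c) (x : X) : c (s x) = x := by
  by_contra hx
  have := h.lt_dist _ _ hx
  have := h.dist_le (s x)
  omega

theorem injective (h : IsVoronoi Γ m s c) : Injective s :=
  LeftInverse.injective h.apply_centre

theorem connected_map (h : IsVoronoi Γ m s c) (hΓ : Γ.Connected) : (Γ.map c).Connected := by
  have : Nonempty X := hΓ.nonempty.map c
  have reach : ∀ {u v}, Γ.Walk u v → (Γ.map c).Reachable (c u) (c v) := by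
    intro u v p
    induction p with
    | nil => rfl
    | @cons u w v huw _ ih =>
      obtain huw' | huw' := eq_or_ne (c u) (c w)
      · rwa [huw']
      · exact (SimpleGraph.map_adj_apply' huw huw').reachable.trans ih
  refine ⟨fun x y => ?_⟩
  rw [← h.apply_centre x, ← h.apply_centre y]
  exact (hΓ.preconnected (s x) (s y)).elim reach

theorem dist_le_of_adj (h : IsVoronoi Γ m s c) (hΓ : Γ.Connected) {x y : X}
    (hxy : (Γ.map c).Adj x y) : Γ.dist (s x) (s y) ≤ 4 * m + 1 := by
  obtain ⟨-, u, v, huv, rfl, rfl⟩ := hxy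
  have h₁ := hΓ.dist_triangle (u := s (c u)) (v := u) (w := s (c v))
  have h₂ := hΓ.dist_triangle (u := u) (v := v) (w := s (c v))
  rw [SimpleGraph.dist_eq_one_iff_adj.2 huv, SimpleGraph.dist_comm (u := v)] at h₂
  have hu := h.dist_le u
  have hv := h.dist_le v
  omega

theorem componentComplMk_eq (h : IsVoronoi Γ m s c) (hΓ : Γ.Connected) {x : X} {K : Set V}
    (hK : ∀ k ∈ K, Γ.dist (s x) k ≤ m) {v : V} (hv : c v ≠ x) :
    ∃ (hvK : v ∉ K) (hsK : s (c v) ∉ K), Γ.componentComplMk hvK = Γ.componentComplMk hsK := by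
  have hx := h.lt_dist x (c v) hv.symm
  have hvx := h.dist_le_dist v x
  have hvK := notMem_of_dist_le hΓ hK hx hvx
  have hsK := notMem_of_dist_le hΓ hK hx (y := s (c v)) (by simp)
  exact ⟨hvK, hsK, componentComplMk_eq_of_dist_le hΓ hK hx hvx hvK hsK⟩

theorem exists_componentCompl_map (h : IsVoronoi Γ m s c) (hΓ : Γ.Connected) {x : X} {K : Set V}
    (hK : ∀ k ∈ K, Γ.dist (s x) k ≤ m) : ∃ f : (Γ.map c).ComponentCompl {x} → Γ.ComponentCompl K,
      ∀ v (_ : c v ≠ x) (hvK : v ∉ K), Γ.componentComplMk hvK ∈ range f := by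
  have hsK : ∀ y ≠ x, s y ∉ K := fun y hy =>
    notMem_of_dist_le hΓ hK (h.lt_dist x y hy.symm) (by simp)
  refine ⟨SimpleGraph.ComponentCompl.lift (fun y hy => Γ.componentComplMk (hsK y hy)) ?_,
    fun v hv hvK => ⟨(Γ.map c).componentComplMk hv, ?_⟩⟩
  · rintro _ _ hy hz ⟨-, u, v, huv, rfl, rfl⟩
    obtain ⟨huK, _, hu⟩ := h.componentComplMk_eq hΓ hK hy
    obtain ⟨hvK, _, hv⟩ := h.componentComplMk_eq hΓ hK hz
    rw [← hu, ← hv, SimpleGraph.componentComplMk_eq_of_adj Γ huK hvK huv]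
  · exact (h.componentComplMk_eq hΓ hK hv).choose_spec.choose_spec.symm

theorem ncard_infiniteComponents_le [Γ.LocallyFinite] (h : IsVoronoi Γ m s c) (hΓ : Γ.Connected)
    {x : X} {K : Finset V} (hK : ∀ k ∈ K, Γ.dist (s x) k ≤ m) :
    (infiniteComponents Γ K).ncard ≤ ENat.card ((Γ.map c).ComponentCompl {x}) := by
  obtain ⟨f, hf⟩ := h.exists_componentCompl_map hΓ (K := (K : Set V)) hK
  have hcell : (c ⁻¹' {x}).Finite := by
    refine (finite_setOf_edist_le (Γ := Γ) (2 * m : ℕ) (s x)).subset ?_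
    rintro v rfl
    exact edist_le_of_dist_le hΓ (h.dist_le v)
  have hrange : infiniteComponents Γ K ⊆ range f := by
    intro C hC
    obtain ⟨v, hv, hvx⟩ := hC.exists_notMem_finite hcell
    obtain ⟨hvK, rfl⟩ := hv
    exact hf v hvx hvK
  calc ((infiniteComponents Γ K).ncard : ℕ∞) ≤ (infiniteComponents Γ K).encard :=
        ncard_le_encard _
    _ ≤ (range f).encard := encard_le_encard hrange
    _ ≤ _ := by
        rw [← image_univ, ← encard_univ]
        exact encard_image_le _ _

end IsVoronoi

end Voronoi

section ManyEnds

variable {V E : Type*} {Γ : SimpleGraph V}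

theorem hasCoarseRegularTree_of_injective {r : V} {f : Option (V × E) → ({r}ᶜ : Set V)}
    {g : ({r}ᶜ : Set V) → Option (V × E)} (hf : Injective f) (hg : Injective g) {ρ : V → ℕ}
    (hfρ : ∀ σ, ρ (slotOwner r σ) < ρ (f σ)) (hgρ : ∀ w, ρ (slotOwner r (g w)) < ρ w) {N : ℕ}
    (hfN : ∀ σ, Γ.edist (slotOwner r σ) (f σ) ≤ N) (hgN : ∀ w, Γ.edist (slotOwner r (g w)) w ≤ N) :
    HasCoarseRegularTree Γ := by
  obtain ⟨h, hbij, hrel⟩ := Embedding.schroeder_bernstein_of_rel hf hg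
    (fun σ w => ρ (slotOwner r σ) < ρ w ∧ Γ.edist (slotOwner r σ) w ≤ N)
    (fun σ => ⟨hfρ σ, hfN σ⟩) (fun w => ⟨hgρ w, hgN w⟩)
  refine hasCoarseRegularTree_of_slots (child := Subtype.val ∘ h) (r := r)
    (Subtype.val_injective.comp hbij.injective) ?_ (fun σ => (hrel σ).1) (fun σ => (hrel σ).2)
  rw [range_comp, hbij.surjective.range_eq, image_univ, Subtype.range_val]

end ManyEnds

namespace IsVoronoi

variable {V X E : Type*} {Γ : SimpleGraph V} {m : ℕ} {s : X → V} {c : V → X} {r : X}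
  {parent left right : X → X}

theorem dist_iterate_le (h : IsVoronoi Γ m s c) (hΓ : Γ.Connected)
    (ht : IsBranchingTree (Γ.map c) r parent left right) (x : X) (i : ℕ) :
    Γ.dist (s x) (s (right^[i] (left x))) ≤ (i + 1) * (4 * m + 1) := by
  have step : ∀ y ≠ r, Γ.dist (s (parent y)) (s y) ≤ 4 * m + 1 := fun y hy =>
    h.dist_le_of_adj hΓ (ht.adj_parent y hy)
  induction i with
  | zero => simpa [ht.parent_left] using step _ (ht.left_ne_root x)
  | succ i ih =>
    rw [iterate_succ_apply']
    have hstep := step _ (ht.right_ne_root (right^[i] (left x)))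
    rw [ht.parent_right] at hstep
    rw [add_one_mul (i + 1)]
    exact hΓ.dist_triangle.trans (add_le_add ih hstep)

theorem dist_parent_le (h : IsVoronoi Γ m s c) (hΓ : Γ.Connected)
    (ht : IsBranchingTree (Γ.map c) r parent left right) (w : V) :
    Γ.dist (s (parent (c w))) w ≤ 6 * m + 1 := by
  have hw := h.dist_le w
  obtain hr | hr := eq_or_ne (c w) r
  · rw [hr, ht.parent_root, ← hr]
    omega
  · have := h.dist_le_of_adj hΓ (ht.adj_parent _ hr)
    have := hΓ.dist_triangle (u := s (parent (c w))) (v := s (c w)) (w := w)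
    omega

/-- The depth of a vertex, ordering vertices lexicographically by the depth of their cell in the
quotient graph and then by their distance to the centre of the cell. -/
noncomputable def depth (Γ : SimpleGraph V) (m : ℕ) (s : X → V) (c : V → X) (r : X) (v : V) : ℕ :=
  (Γ.map c).dist r (c v) * (2 * m + 1) + Γ.dist (s (c v)) v

theorem depth_lt_of_dist_lt (h : IsVoronoi Γ m s c) {v w : V}
    (hvw : (Γ.map c).dist r (c v) < (Γ.map c).dist r (c w)) :
    depth Γ m s c r v < depth Γ m s c r w := by
  have hv := h.dist_le v
  have := Nat.mul_le_mul_right (2 * m + 1) (Nat.succ_le_of_lt hvw)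
  rw [Nat.succ_mul] at this
  simp only [depth]
  omega

theorem depth_parent_lt (h : IsVoronoi Γ m s c) (hΓ : Γ.Connected)
    (ht : IsBranchingTree (Γ.map c) r parent left right) {w : V} (hw : w ≠ s r) :
    depth Γ m s c r (s (parent (c w))) < depth Γ m s c r w := by
  obtain hr | hr := eq_or_ne (c w) r
  · simpa [depth, hr, ht.parent_root, h.apply_centre] using hΓ.pos_dist_of_ne hw.symm
  · refine h.depth_lt_of_dist_lt ?_
    rw [h.apply_centre, ← ht.dist_parent _ hr]
    exact Nat.lt_succ_self _

/-- The number of the slot `σ` among those whose owner lies in a given cell, when the vertices of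
each cell carry distinct labels `ℓ`. -/
noncomputable def slotIndex [Finite E] (ℓ : V → E) (σ : Option (V × E)) : ℕ :=
  Finite.equivFin (Option (E × E)) (σ.map (Prod.map ℓ id))

/-- The centre filling the slot `σ`: a descendant of the cell of the owner of `σ`. -/
noncomputable def slotCentre [Finite E] (s : X → V) (c : V → X) (r : X) (left right : X → X)
    (ℓ : V → E) (σ : Option (V × E)) : V :=
  s (right^[slotIndex ℓ σ] (left (c (slotOwner (s r) σ))))

theorem injective_slotCentre [Finite E] (h : IsVoronoi Γ m s c)
    (ht : IsBranchingTree (Γ.map c) r parent left right) {ℓ : V → E}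
    (hℓ : ∀ v w, c v = c w → ℓ v = ℓ w → v = w) :
    Injective (slotCentre s c r left right ℓ) := by
  intro σ τ hστ
  obtain ⟨howner, hindex⟩ := Prod.ext_iff.1 <| ht.injective_iterate_right_left
    (a₁ := (c (slotOwner (s r) σ), slotIndex ℓ σ)) (a₂ := (c (slotOwner (s r) τ), slotIndex ℓ τ))
    (h.injective hστ)
  have hmap := (Finite.equivFin _).injective (Fin.val_injective hindex)
  match σ, τ with
  | none, none => rfl
  | none, some _ => simp at hmap
  | some _, none => simp at hmap
  | some (v, e), some (w, f) =>
    simp only [Option.map_some, Option.some.injEq, Prod.map, Prod.mk.injEq, id] at hmap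
    rw [hℓ v w howner hmap.1, hmap.2]

theorem dist_slotOwner_lt [Finite E] (h : IsVoronoi Γ m s c)
    (ht : IsBranchingTree (Γ.map c) r parent left right) (ℓ : V → E) (σ : Option (V × E)) :
    (Γ.map c).dist r (c (slotOwner (s r) σ)) <
      (Γ.map c).dist r (c (slotCentre s c r left right ℓ σ)) := by
  rw [slotCentre, h.apply_centre, ht.dist_iterate_right_left]
  omega

theorem dist_slotOwner_le [Finite E] (h : IsVoronoi Γ m s c) (hΓ : Γ.Connected)
    (ht : IsBranchingTree (Γ.map c) r parent left right) (ℓ : V → E) (σ : Option (V × E)) :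
    Γ.dist (slotOwner (s r) σ) (slotCentre s c r left right ℓ σ) ≤
      2 * m + (Nat.card (Option (E × E)) + 1) * (4 * m + 1) := by
  have hindex : slotIndex ℓ σ < Nat.card (Option (E × E)) := Fin.is_lt _
  have howner := SimpleGraph.dist_comm (G := Γ) ▸ h.dist_le (slotOwner (s r) σ)
  exact hΓ.dist_triangle.trans (add_le_add howner
    ((h.dist_iterate_le hΓ ht _ _).trans (Nat.mul_le_mul_right _ (by omega))))

theorem hasCoarseRegularTree [Finite E] (h : IsVoronoi Γ m s c) (hΓ : Γ.Connected)
    (ht : IsBranchingTree (Γ.map c) r parent left right) {ℓ : V → V → E}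
    (hℓ : ∀ v, InjOn (ℓ v) {w | Γ.edist v w ≤ (6 * m + 1 : ℕ)}) : HasCoarseRegularTree Γ := by
  have hℓ' : ∀ v w, c v = c w → ℓ (s (c v)) v = ℓ (s (c w)) w → v = w := by
    intro v w hvw hlabel
    have hv : Γ.dist (s (c v)) v ≤ 6 * m + 1 := (h.dist_le v).trans (by omega)
    have hw : Γ.dist (s (c v)) w ≤ 6 * m + 1 := hvw ▸ (h.dist_le w).trans (by omega)
    exact hℓ _ (edist_le_of_dist_le hΓ hv) (edist_le_of_dist_le hΓ hw) (by rw [hlabel, hvw])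
  let f := slotCentre s c r left right fun v => ℓ (s (c v)) v
  let g (w : V) : Option (V × E) := some (s (parent (c w)), ℓ (s (parent (c w))) w)
  have hf : ∀ σ, f σ ≠ s r := fun σ hσ => by
    simpa [f, hσ, h.apply_centre] using h.dist_slotOwner_lt ht (fun v => ℓ (s (c v)) v) σ
  have hg : Injective g := fun v w hvw => by
    obtain ⟨hparent, hlabel⟩ := Prod.ext_iff.1 (Option.some.inj hvw)
    have hv := edist_le_of_dist_le hΓ (h.dist_parent_le hΓ ht v)
    have hw := edist_le_of_dist_le hΓ (h.dist_parent_le hΓ ht w)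
    simp only at hparent hlabel
    rw [hparent] at hv hlabel
    exact hℓ _ hv hw hlabel
  refine hasCoarseRegularTree_of_injective (f := fun σ => ⟨f σ, hf σ⟩) (g := fun w => g w)
    (N := 6 * m + 1 + (Nat.card (Option (E × E)) + 1) * (4 * m + 1)) ?_
    (hg.comp Subtype.val_injective) (fun σ => h.depth_lt_of_dist_lt (h.dist_slotOwner_lt ht _ σ))
    (fun w => h.depth_parent_lt hΓ ht w.2) (fun σ => ?_) fun w => ?_
  · exact fun σ τ hστ => h.injective_slotCentre ht hℓ' (congrArg Subtype.val hστ)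
  · exact edist_le_of_dist_le hΓ ((h.dist_slotOwner_le hΓ ht _ σ).trans (by omega))
  · exact edist_le_of_dist_le hΓ ((h.dist_parent_le hΓ ht w).trans (Nat.le_add_right _ _))

end IsVoronoi

section VertexTransitive

variable {V V' : Type*} {Γ : SimpleGraph V} {Γ' : SimpleGraph V'}

theorem edist_hom_le (f : Γ →g Γ') (v w : V) : Γ'.edist (f v) (f w) ≤ Γ.edist v w :=
  le_iInf fun p => (SimpleGraph.edist_le (p.map f)).trans_eq (by rw [SimpleGraph.Walk.length_map])

theorem edist_iso (φ : Γ ≃g Γ') (v w : V) : Γ'.edist (φ v) (φ w) = Γ.edist v w :=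
  (edist_hom_le φ.toHom v w).antisymm (by simpa using edist_hom_le φ.symm.toHom (φ v) (φ w))

theorem ncard_infiniteComponents_map (φ : Γ ≃g Γ') (K : Finset V) :
    (infiniteComponents Γ' (K.map φ.toEquiv.toEmbedding)).ncard =
      (infiniteComponents Γ K).ncard := by
  have hbij : BijOn φ (K : Set V)ᶜ ((K.map φ.toEquiv.toEmbedding : Finset V') : Set V')ᶜ := by
    rw [Finset.coe_map]
    exact (φ.injective.injOn.bijOn_image).compl φ.bijective
  let e : Γ.ComponentCompl K ≃ Γ'.ComponentCompl (K.map φ.toEquiv.toEmbedding) :=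
    (φ.induce hbij).connectedComponentEquiv
  have himage : ∀ C, (e C : Set V') = φ '' C := by
    refine fun C => Set.ext fun w => ?_
    obtain ⟨v, rfl⟩ := φ.surjective w
    rw [φ.injective.mem_set_image]
    have hmk (hv : v ∉ (K : Set V)) : Γ'.componentComplMk (hbij.mapsTo hv) = e C ↔
        Γ.componentComplMk hv = C :=
      SimpleGraph.ConnectedComponent.iso_image_comp_eq_map_iff_eq_comp (φ := φ.induce hbij)
        (v := ⟨v, hv⟩) (C := C)
    refine ⟨fun ⟨hw, hC⟩ => ?_, fun ⟨hv, hC⟩ => ⟨hbij.mapsTo hv, (hmk hv).2 hC⟩⟩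
    have hv : v ∉ (K : Set V) := fun hv => hw (by simpa using hv)
    exact ⟨hv, (hmk hv).1 hC⟩
  refine (Nat.card_congr (e.subtypeEquiv fun C => ?_)).symm
  rw [infiniteComponents, infiniteComponents, mem_ofPred_eq, mem_ofPred_eq, himage,
    infinite_image_iff φ.injective.injOn]

/-- The automorphism group of `Γ` acts transitively on the vertices. -/
def IsVertexTransitive (Γ : SimpleGraph V) : Prop :=
  ∀ v w, ∃ φ : Γ ≃g Γ, φ v = w

namespace IsVertexTransitive

variable [Γ.LocallyFinite]

theorem exists_labelling [Nonempty V] (h : IsVertexTransitive Γ) (n : ℕ) :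
    ∃ (E : Finset V) (ℓ : V → V → E), ∀ v, InjOn (ℓ v) {w | Γ.edist v w ≤ n} := by
  obtain ⟨v₀⟩ := ‹Nonempty V›
  obtain ⟨E, hE⟩ := (finite_setOf_edist_le (Γ := Γ) n v₀).exists_finset_coe
  have : Nonempty E := ⟨v₀, by simp [← Finset.mem_coe, hE]⟩
  have hencard : ∀ v, {w | Γ.edist v w ≤ n}.encard ≤ (univ : Set E).encard := by
    intro v
    obtain ⟨φ, rfl⟩ := h v₀ v
    have himage : {w | Γ.edist (φ v₀) w ≤ n} = φ '' E := by
      ext w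
      obtain ⟨w, rfl⟩ := φ.surjective w
      simp [hE, edist_iso]
    rw [himage, φ.injective.encard_image, encard_univ]
    exact le_rfl
  choose ℓ _ hℓ using fun v =>
    (finite_setOf_edist_le (Γ := Γ) n v).exists_injOn_of_encard_le (hencard v)
  exact ⟨E, ℓ, hℓ⟩

theorem hasCoarseRegularTree_of_two_lt_ncard (h : IsVertexTransitive Γ) (hΓ : Γ.Connected)
    {K : Finset V} (hK : 2 < (infiniteComponents Γ K).ncard) : HasCoarseRegularTree Γ := by
  have : Nonempty V := hΓ.nonempty
  obtain ⟨v₀⟩ := hΓ.nonempty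
  obtain ⟨C, c, hc⟩ := exists_isVoronoi Γ (K.sup (Γ.dist v₀))
  have hbranch : ∀ x, 2 < ENat.card ((Γ.map c).ComponentCompl {x}) := by
    intro x
    obtain ⟨φ, hφ⟩ := h v₀ x
    rw [← ncard_infiniteComponents_map φ] at hK
    have hball : ∀ k ∈ K.map φ.toEquiv.toEmbedding, Γ.dist x k ≤ K.sup (Γ.dist v₀) := by
      intro k hk
      obtain ⟨k, hkK, rfl⟩ := Finset.mem_map.1 hk
      calc Γ.dist x (φ k) = Γ.dist v₀ k := by rw [← hφ, SimpleGraph.dist, edist_iso]; rfl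
        _ ≤ _ := Finset.le_sup hkK
    exact lt_of_lt_of_le (by exact_mod_cast hK) (hc.ncard_infiniteComponents_le hΓ hball)
  obtain ⟨parent, left, right, ht⟩ := exists_isBranchingTree (hc.connected_map hΓ) (c v₀) hbranch
  obtain ⟨E, ℓ, hℓ⟩ := h.exists_labelling (6 * K.sup (Γ.dist v₀) + 1)
  exact hc.hasCoarseRegularTree hΓ ht hℓ

theorem hasCoarseRegularTree [Infinite V] (h : IsVertexTransitive Γ) (hΓ : Γ.Connected) :
    HasCoarseRegularTree Γ := by
  by_cases hends : ∀ K, (infiniteComponents Γ K).ncard ≤ 2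
  · have : Fact Γ.Preconnected := ⟨hΓ.preconnected⟩
    exact hasCoarseRegularTree_of_ncard_infiniteComponents_le_two hends
  · push Not at hends
    obtain ⟨K, hK⟩ := hends
    exact h.hasCoarseRegularTree_of_two_lt_ncard hΓ hK

end IsVertexTransitive

end VertexTransitive

section Cayley

variable {G : Type*} [Group G] {S : Set G}

theorem cayleyGraph_adj {g h : G} :
    (cayleyGraph S).Adj g h ↔ g ≠ h ∧ g⁻¹ * h ∈ S ∪ S⁻¹ := by
  have hinv : h⁻¹ * g = (g⁻¹ * h)⁻¹ := by simp
  rw [cayleyGraph, SimpleGraph.fromRel_adj, hinv, ← mem_inv, union_inv, inv_inv, union_comm S⁻¹,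
    or_self]

/-- Left multiplication by `g` as an automorphism of the Cayley graph. -/
def cayleyGraphMulLeft (S : Set G) (g : G) : cayleyGraph S ≃g cayleyGraph S where
  toEquiv := Equiv.mulLeft g
  map_rel_iff' := by simp [cayleyGraph_adj, mul_assoc]

theorem isVertexTransitive_cayleyGraph (S : Set G) : IsVertexTransitive (cayleyGraph S) :=
  fun g h => ⟨cayleyGraphMulLeft S (h * g⁻¹), inv_mul_cancel_right h g⟩

theorem finite_neighborSet_cayleyGraph (hS : S.Finite) (g : G) :
    ((cayleyGraph S).neighborSet g).Finite :=
  ((hS.union hS.inv).image (g * ·)).subset fun h hgh =>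
    ⟨g⁻¹ * h, (cayleyGraph_adj.1 hgh).2, mul_inv_cancel_left g h⟩

theorem connected_cayleyGraph (hS : Subgroup.closure S = ⊤) : (cayleyGraph S).Connected := by
  have reach_mul : ∀ (g s : G), s ∈ S ∪ S⁻¹ → (cayleyGraph S).Reachable g (g * s) := by
    intro g s hs
    obtain heq | hne := eq_or_ne g (g * s)
    · rw [← heq]
    · exact (cayleyGraph_adj.2 ⟨hne, by simpa using hs⟩).reachable
  refine SimpleGraph.connected_iff_exists_forall_reachable _ |>.2 ⟨1, fun g => ?_⟩
  have hg : g ∈ Subgroup.closure S := hS ▸ Subgroup.mem_top g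
  induction hg using Subgroup.closure_induction_right with
  | one => rfl
  | mul_right g _ s hs ih => exact ih.trans (reach_mul g s (.inl hs))
  | mul_inv_cancel g _ s hs ih => exact ih.trans (reach_mul g s⁻¹ (.inr (inv_mem_inv.2 hs)))

theorem le_cayleyGraph_of_edist_le {T : SimpleGraph G} {n : ℕ∞}
    (hT : ∀ g h, T.Adj g h → (cayleyGraph S).edist g h ≤ n) :
    T ≤ cayleyGraph (S ∪ {g | (cayleyGraph S).edist 1 g ≤ n}) := fun g h hgh => by
  refine cayleyGraph_adj.2 ⟨hgh.ne, .inl (.inr ?_)⟩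
  rw [mem_ofPred_eq, ← edist_iso (cayleyGraphMulLeft S g)]
  simpa [cayleyGraphMulLeft] using hT g h hgh

end Cayley

/-- Every finitely generated infinite group has a Cayley graph admitting a regular
spanning tree. -/
theorem cayley_graph_with_regular_spanning_tree
    (G : Type*) [Group G] [Group.FG G] [Infinite G] :
    ∃ S : Set G, IsFinGenSet S ∧ ∃ T : SimpleGraph G, T ≤ cayleyGraph S ∧ T.IsTree ∧
      ∃ d : ℕ∞, ∀ v : G, (T.neighborSet v).encard = d := by
  obtain ⟨S, hS, hfin⟩ := Group.fg_iff.1 ‹Group.FG G›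
  have : (cayleyGraph S).LocallyFinite := fun g => (finite_neighborSet_cayleyGraph hfin g).fintype
  obtain ⟨N, T, hT, hTN, hreg⟩ :=
    (isVertexTransitive_cayleyGraph S).hasCoarseRegularTree (connected_cayleyGraph hS)
  refine ⟨S ∪ {g | (cayleyGraph S).edist 1 g ≤ N}, ⟨?_, ?_⟩, T, ?_, hT, hreg⟩
  · exact hfin.union (finite_setOf_edist_le N 1)
  · exact top_unique (hS.ge.trans (Subgroup.closure_mono subset_union_left))
  · exact le_cayleyGraph_of_edist_le hTN
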